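/- arXiv:2411.13706 — 2 statements merged into one kernel-verified Lean document; each statement's English description precedes it below -/
import Mathlib

section
/- Let X be a Grothendieck category satisfying (AB4*) (products are exact), let Y be a localizing subcategory of X, and let π : X → X/Y be the quotient functor. If 𝒵 is a closed subcategory of X/Y, then Ẑ = (π^{-1}(𝒵))', the full subcategory of X generated by the Y-torsionfree objects M with π(M) ∈ 𝒵, is a Y-closed subcategory of X. -/
open CategoryTheory CategoryTheory.Limits Opposite

universe v u

namespace Paper

variable {C : Type u} [Category.{v} C]

/-- An object `M` is compact if `Hom(M, -)` commutes with arbitrary (small) direct sums. -/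
def IsCompactObj (M : C) : Prop :=
  ∀ ι : Type v, Nonempty (PreservesColimitsOfShape (Discrete ι) (coyoneda.obj (op M)))

variable [Abelian C]

section
variable [HasColimits C]

/-- A full subcategory (given by its set of objects) is weakly closed if it is closed
under subobjects, quotient objects and arbitrary (small) direct sums. -/
structure IsWeaklyClosed (Z : Set C) : Prop where
  mem_of_mono : ∀ {A M : C} (f : A ⟶ M), Mono f → M ∈ Z → A ∈ Z
  mem_of_epi : ∀ {M B : C} (f : M ⟶ B), Epi f → M ∈ Z → B ∈ Z
  sigma_mem : ∀ {ι : Type v} (f : ι → C), (∀ i, f i ∈ Z) → (∐ f) ∈ Z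

/-- Closure under arbitrary (small) products. -/
def ClosedUnderProducts [HasLimits C] (Z : Set C) : Prop :=
  ∀ {ι : Type v} (f : ι → C), (∀ i, f i ∈ Z) → (∏ᶜ f) ∈ Z

/-- A closed subcategory: weakly closed and closed under products. -/
def IsClosedSub [HasLimits C] (Z : Set C) : Prop :=
  IsWeaklyClosed Z ∧ ClosedUnderProducts Z

/-- Closure under extensions. -/
def ClosedUnderExtensions (Y : Set C) : Prop :=
  ∀ S : ShortComplex C, S.ShortExact → S.X₁ ∈ Y → S.X₃ ∈ Y → S.X₂ ∈ Y

/-- A localizing subcategory: weakly closed and closed under extensions. -/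
def IsLocalizing (Y : Set C) : Prop :=
  IsWeaklyClosed Y ∧ ClosedUnderExtensions Y

/-- The full subcategory generated by a class of objects `G`: all quotient objects
of (small) direct sums of objects of `G`. -/
def generatedBy (G : Set C) : Set C :=
  { M | ∃ (ι : Type v) (f : ι → C), (∀ i, f i ∈ G) ∧ ∃ p : (∐ f) ⟶ M, Epi p }

end

/-- A filter of subobjects of an object: nonempty, upward closed, and closed under
finite intersections. -/
def IsFilterOn {O : C} (F : Set (Subobject O)) : Prop :=
  F.Nonempty ∧ (∀ {I J : Subobject O}, I ∈ F → I ≤ J → J ∈ F) ∧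
    ∀ {I J : Subobject O}, I ∈ F → J ∈ F → I ⊓ J ∈ F

/-- A principal filter consists of all subobjects containing a fixed one. -/
def IsPrincipalFilter {O : C} (F : Set (Subobject O)) : Prop :=
  ∃ I : Subobject O, F = { J | I ≤ J }

variable {A : Type v}

/-- A filter system in a family of objects. -/
def IsFilterSystem (O : A → C) (F : ∀ α, Set (Subobject (O α))) : Prop :=
  (∀ α, IsFilterOn (F α)) ∧
    ∀ (α β : A) (f : O α ⟶ O β), ∀ J ∈ F β, (Subobject.pullback f).obj J ∈ F α

/-- An ideal in a family of generators: a choice of subobject `I α ⊆ O α` for each `α`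
such that `f (I α) ⊆ I β` for every morphism `f : O α ⟶ O β`
(expressed as `I α ≤ f⁻¹ (I β)`). -/
def IsIdealIn (O : A → C) (I : ∀ α, Subobject (O α)) : Prop :=
  ∀ (α β : A) (f : O α ⟶ O β), I α ≤ (Subobject.pullback f).obj (I β)

/-- The quotient object `O/I` of `O` by a subobject `I`. -/
noncomputable def quotBy {O : C} (I : Subobject O) : C := cokernel I.arrow

/-- The weakly closed subcategory generated by the objects `O α / I`, `I ∈ F α`. -/
def wcOfFilterSystem [HasColimits C] (O : A → C) (F : ∀ α, Set (Subobject (O α))) : Set C :=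
  generatedBy { M | ∃ (α : A) (I : Subobject (O α)), I ∈ F α ∧ Nonempty (quotBy I ≅ M) }

/-- The filter system associated to a subcategory `Z`: `F α = {I | O α / I ∈ Z}`. -/
def filterOf (O : A → C) (Z : Set C) (α : A) : Set (Subobject (O α)) :=
  { I | quotBy I ∈ Z }

section QuotientCat

variable {D : Type u} [Category.{v} D]

/-- The image `π(Z)` of a subcategory, as a full subcategory of the target
(closed under isomorphism). -/
def imageSub (π : C ⥤ D) (Z : Set C) : Set D := { N | ∃ M ∈ Z, Nonempty (π.obj M ≅ N) }

/-- The preimage `π⁻¹(𝒵)` of a subcategory. -/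
def preimageSub (π : C ⥤ D) (Z : Set D) : Set C := { M | π.obj M ∈ Z }

/-- `M` is `Y`-torsionfree if it has no nonzero subobject belonging to `Y`. -/
def IsTorsionFree (Y : Set C) (M : C) : Prop :=
  ∀ (N : C) (f : N ⟶ M), Mono f → N ∈ Y → IsZero N

/-- `Z` is `Y`-essentially stable if `ωπ(M) ∈ Z` for all `M ∈ Z`. -/
def EssStable (π : C ⥤ D) (ω : D ⥤ C) (Z : Set C) : Prop :=
  ∀ M ∈ Z, ω.obj (π.obj M) ∈ Z

/-- `Z'`: the full subcategory generated by the `Y`-torsionfree objects of `Z`. -/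
def torsPart [HasColimits C] (Y Z : Set C) : Set C :=
  generatedBy { M | M ∈ Z ∧ IsTorsionFree Y M }

/-- `Z` is `Y`-torsionfree generated if every object of `Z` is a quotient of a direct sum
of `Y`-torsionfree objects of `Z`. -/
def TorsionfreeGenerated [HasColimits C] (Y Z : Set C) : Prop :=
  Z ⊆ torsPart Y Z

/-- `Z` is `Y`-weakly closed: weakly closed, `Y`-essentially stable
and `Y`-torsionfree generated. -/
def IsYWeaklyClosed [HasColimits C] (π : C ⥤ D) (ω : D ⥤ C) (Y Z : Set C) : Prop :=
  IsWeaklyClosed Z ∧ EssStable π ω Z ∧ TorsionfreeGenerated Y Z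

/-- `Z` is `Y`-closed: closed, `Y`-essentially stable and `Y`-torsionfree generated. -/
def IsYClosed [HasLimits C] [HasColimits C] (π : C ⥤ D) (ω : D ⥤ C) (Y Z : Set C) : Prop :=
  IsClosedSub Z ∧ EssStable π ω Z ∧ TorsionfreeGenerated Y Z

end QuotientCat

/-- The Gabriel product `Z * W`: all objects `P` fitting in a short exact sequence
`0 → M → P → N → 0` with `M ∈ W` and `N ∈ Z`. -/
def gabrielProd (Z W : Set C) : Set C :=
  { P | ∃ S : ShortComplex C, S.ShortExact ∧ S.X₁ ∈ W ∧ S.X₃ ∈ Z ∧ Nonempty (S.X₂ ≅ P) }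

/-- `Isat` is the `Y`-saturation of `I` inside `O`: the largest subobject `J ⊇ I`
with `J/I ∈ Y`; that is, `Isat/I = τ(O/I)`. -/
def IsSaturationOf (Y : Set C) {O : C} (I Isat : Subobject O) : Prop :=
  ∃ h : I ≤ Isat, cokernel (Subobject.ofLE I Isat h) ∈ Y ∧
    ∀ (J : Subobject O) (hJ : I ≤ J), cokernel (Subobject.ofLE I J hJ) ∈ Y → J ≤ Isat


/-- The subcategory generated by the objects `O α / I α` for an ideal `I`. -/
def wcOfIdeal [HasColimits C] (O : A → C) (I : ∀ α, Subobject (O α)) : Set C :=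
  generatedBy { M | ∃ α : A, Nonempty (quotBy (I α) ≅ M) }

/-- The union `Z₁ ∪ Z₂` of two weakly closed subcategories: explicitly, all
subquotients of objects `M ⊞ N` with `M ∈ Z₁` and `N ∈ Z₂`. -/
def unionWC (Z₁ Z₂ : Set C) : Set C :=
  { P | ∃ (M N Q : C) (i : Q ⟶ M ⊞ N) (p : Q ⟶ P), M ∈ Z₁ ∧ N ∈ Z₂ ∧ Mono i ∧ Epi p }

set_option linter.unusedSectionVars false

section Helpers

variable {X : Type u} [Category.{v} X] [Abelian X] [HasLimits X] [HasColimits X]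

open Classical in
/-- The canonical morphism from the coproduct to the product. -/
noncomputable def sigmaToPi {ι : Type v} (f : ι → X) : (∐ f) ⟶ ∏ᶜ f :=
  Sigma.desc fun i => Pi.ι f i

lemma mono_finite_sigmaToPi {ι : Type v} (f : ι → X) {κ : Type v} [Finite κ] (e : κ → ι)
    (he : Function.Injective e) :
    Mono (Limits.Sigma.desc (fun k => Limits.Sigma.ι f (e k)) ≫ sigmaToPi f) := by
  classical
  have := Fintype.ofFinite κ
  let r : (∏ᶜ f) ⟶ ∐ fun k => f (e k) :=
    ∑ k, Limits.Pi.π f (e k) ≫ Limits.Sigma.ι (fun k => f (e k)) k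
  have key : (Limits.Sigma.desc (fun k => Limits.Sigma.ι f (e k)) ≫ sigmaToPi f) ≫ r = 𝟙 _ := by
    refine Limits.Sigma.hom_ext _ _ fun s => ?_
    have h1 : Limits.Sigma.ι (fun k => f (e k)) s ≫
        (Limits.Sigma.desc (fun k => Limits.Sigma.ι f (e k)) ≫ sigmaToPi f) =
          Limits.Pi.ι f (e s) := by
      simp only [sigmaToPi, Limits.Sigma.ι_desc_assoc, Limits.Sigma.ι_desc]
    rw [← Category.assoc, h1, Category.comp_id]
    simp only [r, Preadditive.comp_sum]
    rw [Finset.sum_eq_single s]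
    · rw [Limits.Pi.ι_π_eq_id_assoc]
    · intro t _ hts
      rw [Limits.Pi.ι_π_of_ne_assoc, zero_comp]
      intro h
      exact hts (he h.symm)
    · simp
  have : Mono ((Limits.Sigma.desc (fun k => Limits.Sigma.ι f (e k)) ≫ sigmaToPi f) ≫ r) := by
    rw [key]; infer_instance
  exact mono_of_mono _ r

lemma mono_sigmaToPi [HasFilteredColimits X] [AB5 X] {ι : Type v} (f : ι → X) :
    Mono (sigmaToPi f) := by
  classical
  have hc := CoproductsFromFiniteFiltered.isColimitFiniteSubproductsCocone f
  let φ : CoproductsFromFiniteFiltered.liftToFinsetObj (Discrete.functor f) ⟶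
      (Functor.const _).obj (∏ᶜ f) :=
    (CoproductsFromFiniteFiltered.finiteSubcoproductsCocone f).ι ≫
      (Functor.const _).map (sigmaToPi f)
  have hφ : ∀ S, Mono (φ.app S) := fun S =>
    mono_finite_sigmaToPi f (fun s : S => s.1.as)
      (fun _ _ h => Subtype.ext (Discrete.ext h))
  have := NatTrans.mono_of_mono_app φ
  have : IsConnected (Finset (Discrete ι)) := IsFiltered.isConnected _
  exact colim.map_mono' φ hc (isColimitConstCocone (Finset (Discrete ι)) (∏ᶜ f)) (sigmaToPi f)
    (fun j => (Category.comp_id _).symm)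

lemma epi_piMap [HasProducts.{v} X] [AB4Star X] {ι : Type v} {f g : ι → X} (p : ∀ i, f i ⟶ g i)
    [∀ i, Epi (p i)] : Epi (Limits.Pi.map p) := by
  let φ : Discrete.functor f ⟶ Discrete.functor g := Discrete.natTrans fun i => p i.as
  have : ∀ i, Epi (φ.app i) := fun i => by dsimp [φ]; infer_instance
  have := NatTrans.epi_of_epi_app φ
  have := (AB4StarOfSize.ofShape (C := X) ι).preservesFiniteColimits
  exact inferInstanceAs (Epi (lim.map φ))

variable {Y : Set X}

lemma IsTorsionFree.eq_zero (hY : IsWeaklyClosed Y) {M : X} (hM : IsTorsionFree Y M) {N : X}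
    (hN : N ∈ Y) (f : N ⟶ M) : f = 0 := by
  have h := hM (image f) (image.ι f) inferInstance
    (hY.mem_of_epi (factorThruImage f) inferInstance hN)
  rw [← image.fac f, h.eq_of_tgt (factorThruImage f) 0, zero_comp]

lemma isTorsionFree_of {M : X} (h : ∀ (N : X) (f : N ⟶ M), N ∈ Y → f = 0) :
    IsTorsionFree Y M := by
  intro N f hf hN
  rw [IsZero.iff_id_eq_zero, ← cancel_mono f, h N f hN]
  simp

lemma IsTorsionFree.of_mono {M A : X} (hM : IsTorsionFree Y M) (f : A ⟶ M) [Mono f] :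
    IsTorsionFree Y A := fun N g _ hN => hM N (g ≫ f) (mono_comp g f) hN

lemma IsTorsionFree.pi (hY : IsWeaklyClosed Y) {ι : Type v} {f : ι → X}
    (h : ∀ i, IsTorsionFree Y (f i)) : IsTorsionFree Y (∏ᶜ f) := by
  refine isTorsionFree_of fun N g hN => ?_
  refine Pi.hom_ext _ _ fun i => ?_
  rw [zero_comp]
  exact (h i).eq_zero hY hN _

lemma IsTorsionFree.sigma [HasFilteredColimits X] [AB5 X]
    (hY : IsWeaklyClosed Y) {ι : Type v} {f : ι → X}
    (h : ∀ i, IsTorsionFree Y (f i)) : IsTorsionFree Y (∐ f) := by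
  have := mono_sigmaToPi f
  exact (IsTorsionFree.pi hY h).of_mono (sigmaToPi f)

variable {D : Type u} [Category.{v} D] [Abelian D] [HasLimits D] [HasColimits D]
  {π : X ⥤ D} {ω : D ⥤ X}

lemma isTorsionFree_omega (adj : π ⊣ ω) (hker : ∀ M : X, M ∈ Y ↔ IsZero (π.obj M)) (N : D) :
    IsTorsionFree Y (ω.obj N) := by
  refine isTorsionFree_of fun A f hA => ?_
  apply (adj.homEquiv A N).symm.injective
  exact ((hker A).1 hA).eq_of_src _ _

lemma mono_unit (adj : π ⊣ ω) [PreservesFiniteLimits π] [ω.Full] [ω.Faithful]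
    (hker : ∀ M : X, M ∈ Y ↔ IsZero (π.obj M)) {M : X} (hM : IsTorsionFree Y M) :
    Mono (adj.unit.app M) := by
  have : IsIso (π.map (adj.unit.app M)) := inferInstance
  have := adj.leftAdjoint_preservesColimits
  have : π.PreservesZeroMorphisms := inferInstance
  have h0 : π.map (kernel.ι (adj.unit.app M)) = 0 := by
    rw [← cancel_mono (π.map (adj.unit.app M)), ← π.map_comp, kernel.condition]
    simp
  have hz : IsZero (π.obj (kernel (adj.unit.app M))) := by
    rw [IsZero.iff_id_eq_zero, ← cancel_mono (π.map (kernel.ι (adj.unit.app M))), h0]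
    simp
  have := hM _ (kernel.ι (adj.unit.app M)) inferInstance ((hker _).2 hz)
  exact Preadditive.mono_of_kernel_zero (this.eq_of_src _ _)

/-- Every object of `Ẑ` is a quotient of a single torsionfree object of `π⁻¹ 𝒵`. -/
lemma exists_cover [HasFilteredColimits X] [AB5 X] (hY : IsWeaklyClosed Y) (adj : π ⊣ ω)
    {𝒵 : Set D} (h𝒵 : IsWeaklyClosed 𝒵) {M : X} (hM : M ∈ torsPart Y (preimageSub π 𝒵)) :
    ∃ (T : X) (p : T ⟶ M), π.obj T ∈ 𝒵 ∧ IsTorsionFree Y T ∧ Epi p := by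
  obtain ⟨ι, f, hf, p, hp⟩ := hM
  have := adj.leftAdjoint_preservesColimits
  refine ⟨_, p, ?_, IsTorsionFree.sigma hY fun i => (hf i).2, hp⟩
  exact h𝒵.mem_of_epi (PreservesCoproduct.iso π f).inv inferInstance
    (h𝒵.sigma_mem _ fun i => (hf i).1)

lemma mem_of_cover {G : Set X} {T M : X} (p : T ⟶ M) [Epi p] (hT : T ∈ G) :
    M ∈ generatedBy G := by
  refine ⟨PUnit, fun _ => T, fun _ => hT, Sigma.desc fun _ => p, ?_⟩
  have : Epi (Sigma.ι (fun _ : PUnit.{v+1} => T) PUnit.unit ≫ Sigma.desc fun _ => p) := by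
    rw [Sigma.ι_desc]; infer_instance
  exact epi_of_epi (Sigma.ι (fun _ : PUnit.{v+1} => T) PUnit.unit) _

end Helpers

/-- If `X` satisfies (AB4*) and `𝒵` is a closed subcategory of `X/Y`,
then `Ẑ = (π⁻¹(𝒵))'` is a `Y`-closed subcategory of `X`. -/
theorem statement_10 {X : Type u} [Category.{v} X] [Abelian X]
    [HasLimits X] [HasColimits X] [HasFilteredColimits X] [AB5 X]
    [HasProducts X] [AB4Star X]
    (hgen : ∃ G : X, IsSeparator G)
    {D : Type u} [Category.{v} D] [Abelian D] [HasLimits D] [HasColimits D]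
    (Y : Set X) (hYloc : IsLocalizing Y)
    (π : X ⥤ D) (ω : D ⥤ X) (adj : π ⊣ ω) [PreservesFiniteLimits π]
    [ω.Full] [ω.Faithful]
    (hker : ∀ M : X, M ∈ Y ↔ IsZero (π.obj M))
    (𝒵 : Set D) (h𝒵 : IsClosedSub 𝒵) :
    IsYClosed π ω Y (torsPart Y (preimageSub π 𝒵)) := by
  have hY := hYloc.1
  have hZ := h𝒵.1
  have hcolim := adj.leftAdjoint_preservesColimits
  have hlim := adj.rightAdjoint_preservesLimits
  refine ⟨⟨⟨?_, ?_, ?_⟩, ?_⟩, ?_, ?_⟩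
  · intro A M f hf hM
    obtain ⟨T, p, h1, h2, hp⟩ := exists_cover hY adj hZ hM
    refine mem_of_cover (pullback.snd p f) ⟨?_, h2.of_mono (pullback.fst p f)⟩
    exact hZ.mem_of_mono (π.map (pullback.fst p f)) inferInstance h1
  · rintro M B f hf ⟨ι, g, hg, p, hp⟩
    exact ⟨ι, g, hg, p ≫ f, epi_comp p f⟩
  · intro ι f hf
    choose T p h1 h2 hp using fun i => exists_cover hY adj hZ (hf i)
    exact ⟨ι, T, fun i => ⟨h1 i, h2 i⟩, Limits.Sigma.map p, inferInstance⟩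
  · intro ι f hf
    choose T p h1 h2 hp using fun i => exists_cover hY adj hZ (hf i)
    have := epi_piMap p
    refine mem_of_cover (Limits.Pi.map p) ⟨?_, IsTorsionFree.pi hY h2⟩
    have hm : ∀ i, Mono (adj.unit.app (T i)) := fun i => mono_unit adj hker (h2 i)
    let m : (∏ᶜ T) ⟶ ∏ᶜ fun i => ω.obj (π.obj (T i)) := Limits.Pi.map fun i => adj.unit.app (T i)
    have hmm : Mono m := by dsimp only [m]; infer_instance
    let k := π.map (m ≫ (PreservesProduct.iso ω fun i => π.obj (T i)).inv) ≫
      adj.counit.app (∏ᶜ fun i => π.obj (T i))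
    exact hZ.mem_of_mono k (by dsimp only [k]; infer_instance) (h𝒵.2 _ h1)
  · intro M hM
    obtain ⟨T, p, h1, h2, hp⟩ := exists_cover hY adj hZ hM
    refine mem_of_cover (𝟙 _) ⟨?_, isTorsionFree_omega adj hker _⟩
    have hM' : π.obj M ∈ 𝒵 := hZ.mem_of_epi (π.map p) inferInstance h1
    exact hZ.mem_of_mono (adj.counit.app (π.obj M)) inferInstance hM'
  · rintro M ⟨ι, g, hg, p, hp⟩
    exact ⟨ι, g, fun i => ⟨mem_of_cover (𝟙 _) (hg i), (hg i).2⟩, p, hp⟩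

end Paper
end

section
/- Let X be a Grothendieck category with a localizing subcategory Y, quotient functor π : X → X/Y, and let Z₁, Z₂ be weakly closed subcategories of X. Then: (1) π(Z₁) ∪ π(Z₂) = π(Z₁ ∪ Z₂); (2) if Z₁ and Z₂ are Y-torsionfree generated, then so is Z₁ ∪ Z₂; (3) if X satisfies (AB4*) and Z₁, Z₂ are closed in X, then Z₁ ∪ Z₂ is closed in X, and if in addition Z₁ ∪ Z₂ is Y-essentially stable, then π(Z₁) ∪ π(Z₂) is closed in X/Y. -/
open CategoryTheory CategoryTheory.Limits Opposite

universe v u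

namespace Paper

variable {C : Type u} [Category.{v} C]

variable [Abelian C]

variable {A : Type v}

section Helpers

/-- A torsionfree object receives no nonzero morphism from a torsion object. -/
lemma torsionFree_hom_zero [HasColimits C] {Y : Set C} (hY : IsWeaklyClosed Y) {M : C}
    (hM : IsTorsionFree Y M) {T : C} (hT : T ∈ Y) (g : T ⟶ M) : g = 0 := by
  have hI : Limits.image g ∈ Y := hY.mem_of_epi (factorThruImage g) inferInstance hT
  have hz := hM _ (Limits.image.ι g) inferInstance hI
  rw [← Limits.image.fac g, hz.eq_of_tgt (factorThruImage g) 0, zero_comp]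

lemma torsionFree_of_hom_zero {Y : Set C} {M : C}
    (h : ∀ (T : C), T ∈ Y → ∀ g : T ⟶ M, g = 0) : IsTorsionFree Y M := by
  intro N f hf hN
  rw [IsZero.iff_id_eq_zero, ← cancel_mono f, h N hN f, comp_zero, comp_zero]

open CoproductsFromFiniteFiltered in
/-- In an AB5 category, a morphism to a coproduct vanishes if all its components do. -/
lemma hom_sigma_zero [HasColimits C] [HasFilteredColimits C] [AB5 C] {ι : Type v} [DecidableEq ι]
    (f : ι → C) {T : C} (x : T ⟶ ∐ f)
    (h : ∀ i, x ≫ (Sigma.π f i) = 0) : x = 0 := by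
  have : IsConnected (Finset (Discrete ι)) := IsFiltered.isConnected _
  have hF : ∀ (F : Finset (Discrete ι)) (W : C)
      (a : W ⟶ ∐ fun x : F => (Discrete.functor f).obj x) (b : W ⟶ T)
      (_ : a ≫ (finiteSubcoproductsCocone f).ι.app F = b ≫ x), b ≫ x = 0 := by
    intro F W a b hab
    have hs := finiteSubcoproductsCocone_ι_app_eq_sum f F
    have hd : (finiteSubcoproductsCocone f).ι.app F =
      Sigma.desc (fun s : F => Sigma.ι f s.1.as) := rfl
    rw [← hab, hs]
    refine (Preadditive.comp_sum _ _ _).trans (Finset.sum_eq_zero fun k _ => ?_)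
    have h1 : Sigma.π (fun x : F => (Discrete.functor f).obj x) k =
        Sigma.desc (fun s : F => Sigma.ι f s.1.as) ≫ Sigma.π f k.1.as := by
      apply Sigma.hom_ext
      intro l
      by_cases hl : l = k
      · subst hl
        simp
      · rw [Sigma.ι_π_of_ne _ hl]
        have : l.1.as ≠ k.1.as := fun e => hl (Subtype.ext (Discrete.ext e))
        simp [Sigma.ι_π_of_ne _ this]
    have h2 : a ≫ Sigma.π (fun x : F => (Discrete.functor f).obj x) k = 0 := by
      rw [h1, ← Category.assoc]
      refine (congrArg (· ≫ Sigma.π f k.1.as) hab).trans ?_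
      simp [h]
    exact (Category.assoc _ _ _).symm.trans
      ((congrArg (· ≫ Sigma.ι f k.1.as) h2).trans zero_comp)
  have := (isColimitFiniteSubproductsCocone f).pullback_zero_ext (f := x)
    (g := 𝟙 (∐ f)) (fun F => (congrArg _ (Category.comp_id x)).trans
      (hF F _ _ _ pullback.condition))
  exact (Category.comp_id x).symm.trans this

lemma torsionFree_sigma [HasColimits C] [HasFilteredColimits C] [AB5 C] {Y : Set C}
    (hY : IsWeaklyClosed Y) {ι : Type v} (f : ι → C) (hf : ∀ i, IsTorsionFree Y (f i)) :
    IsTorsionFree Y (∐ f) := by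
  classical
  exact torsionFree_of_hom_zero fun _ hT g => hom_sigma_zero f g fun i =>
    torsionFree_hom_zero hY (hf i) hT _

lemma mem_of_iso [HasColimits C] {Z : Set C} (hZ : IsWeaklyClosed Z) {M N : C} (e : M ≅ N)
    (hM : M ∈ Z) : N ∈ Z := hZ.mem_of_epi e.hom inferInstance hM

lemma unionWC_weaklyClosed [HasColimits C] [HasFilteredColimits C] [AB5 C] {Z₁ Z₂ : Set C}
    (h₁ : IsWeaklyClosed Z₁) (h₂ : IsWeaklyClosed Z₂) : IsWeaklyClosed (unionWC Z₁ Z₂) where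
  mem_of_mono := by
    rintro A P f hf ⟨M, N, Q, i, p, hM, hN, hi, hp⟩
    exact ⟨M, N, pullback p f, pullback.fst p f ≫ i, pullback.snd p f, hM, hN,
      mono_comp _ _, inferInstance⟩
  mem_of_epi := by
    rintro P B f hf ⟨M, N, Q, i, p, hM, hN, hi, hp⟩
    exact ⟨M, N, Q, i, p ≫ f, hM, hN, hi, epi_comp _ _⟩
  sigma_mem := by
    intro ι f hf
    choose M N Q i p hM hN hi hp using hf
    have : HasFiniteBiproducts C := HasFiniteBiproducts.of_hasFiniteProducts
    have : AB4OfSize.{v} C := AB4.of_AB5 C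
    have m1 : Mono (Limits.Sigma.map i) := inferInstance
    have e1 : Epi (Limits.Sigma.map p) := inferInstance
    let φ : (∐ fun j => M j ⊞ N j) ⟶ (∐ M) ⊞ (∐ N) :=
      Sigma.desc fun j => biprod.map (Sigma.ι M j) (Sigma.ι N j)
    let ψ : (∐ M) ⊞ (∐ N) ⟶ (∐ fun j => M j ⊞ N j) :=
      biprod.desc (Limits.Sigma.map fun j => biprod.inl) (Limits.Sigma.map fun j => biprod.inr)
    have hφψ : φ ≫ ψ = 𝟙 _ := by
      apply Sigma.hom_ext
      intro j
      apply biprod.hom_ext' <;> simp [φ, ψ]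
    have : Mono φ := mono_of_mono_fac hφψ
    exact ⟨∐ M, ∐ N, ∐ Q, Limits.Sigma.map i ≫ φ, Limits.Sigma.map p, h₁.sigma_mem M hM,
      h₂.sigma_mem N hN, mono_comp _ _, e1⟩

lemma unionWC_products [HasLimits C] [HasProducts.{v} C] [AB4Star C] {Z₁ Z₂ : Set C}
    (h₁ : ClosedUnderProducts Z₁) (h₂ : ClosedUnderProducts Z₂) :
    ClosedUnderProducts (unionWC Z₁ Z₂) := by
  intro ι f hf
  choose M N Q i p hM hN hi hp using hf
  have m1 : Mono (Limits.Pi.map i) := inferInstance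
  have e1 : Epi (Limits.Pi.map p) := by
    have : ∀ j, Epi ((Discrete.natTrans (F := Discrete.functor Q) (G := Discrete.functor f)
      fun X => p X.as).app j) := fun j => hp j.as
    have := NatTrans.epi_of_epi_app (Discrete.natTrans (F := Discrete.functor Q)
      (G := Discrete.functor f) fun X => p X.as)
    exact inferInstanceAs (Epi (lim.map (Discrete.natTrans (F := Discrete.functor Q)
      (G := Discrete.functor f) fun X => p X.as)))
  let φ : (∏ᶜ fun j => M j ⊞ N j) ⟶ (∏ᶜ M) ⊞ (∏ᶜ N) :=
    biprod.lift (Limits.Pi.map fun j => biprod.fst) (Limits.Pi.map fun j => biprod.snd)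
  let ψ : (∏ᶜ M) ⊞ (∏ᶜ N) ⟶ (∏ᶜ fun j => M j ⊞ N j) :=
    Pi.lift fun j => biprod.map (Pi.π M j) (Pi.π N j)
  have hφψ : φ ≫ ψ = 𝟙 _ := by
    apply Pi.hom_ext
    intro j
    apply biprod.hom_ext <;> simp [φ, ψ]
  have : Mono φ := mono_of_mono_fac hφψ
  exact ⟨∏ᶜ M, ∏ᶜ N, ∏ᶜ Q, Limits.Pi.map i ≫ φ, Limits.Pi.map p, h₁ M hM, h₂ N hN,
    mono_comp _ _, e1⟩

section Quot

variable {D : Type u} [Category.{v} D] [Abelian D] {π : C ⥤ D} {ω : D ⥤ C}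

/-- Subobjects of `π M` lift to subobjects of `M`. -/
lemma lift_mono (adj : π ⊣ ω) [PreservesFiniteLimits π] [ω.Full] [ω.Faithful]
    {M : C} {Q : D} (m : Q ⟶ π.obj M) [Mono m] :
    ∃ (Q₀ : C) (m₀ : Q₀ ⟶ M) (_ : π.obj Q₀ ≅ Q), Mono m₀ := by
  have : ω.PreservesMonomorphisms := ω.preservesMonomorphisms_of_adjunction adj
  have hη : IsIso (π.map (adj.unit.app M)) := inferInstance
  have sq := (IsPullback.of_hasPullback (ω.map m) (adj.unit.app M)).map π
  have : IsIso (π.map (pullback.fst (ω.map m) (adj.unit.app M))) := sq.isIso_fst_of_isIso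
  exact ⟨pullback (ω.map m) (adj.unit.app M), pullback.snd _ _,
    asIso (π.map (pullback.fst (ω.map m) (adj.unit.app M))) ≪≫ asIso (adj.counit.app Q),
    inferInstance⟩

/-- Quotients of `π M` lift to quotients of `M`. -/
lemma lift_epi (adj : π ⊣ ω) [PreservesFiniteLimits π] [ω.Full] [ω.Faithful]
    {M : C} {P : D} (p : π.obj M ⟶ P) [Epi p] :
    ∃ (P₀ : C) (p₀ : M ⟶ P₀) (_ : π.obj P₀ ≅ P), Epi p₀ := by
  let g : M ⟶ ω.obj P := adj.unit.app M ≫ ω.map p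
  let q : π.obj (Limits.image g) ⟶ P := π.map (Limits.image.ι g) ≫ adj.counit.app P
  have hq : π.map (factorThruImage g) ≫ q = p := by
    simp only [q, ← Category.assoc, ← π.map_comp, Limits.image.fac]
    simp [g]
  have : Epi q := epi_of_epi_fac hq
  have : Mono q := mono_comp _ _
  have : IsIso q := isIso_of_mono_of_epi q
  exact ⟨Limits.image g, factorThruImage g, asIso q, inferInstance⟩

lemma imageSub_union [HasColimits C] (adj : π ⊣ ω) [PreservesFiniteLimits π] [ω.Full] [ω.Faithful]
    (Z₁ Z₂ : Set C) :
    unionWC (imageSub π Z₁) (imageSub π Z₂) = imageSub π (unionWC Z₁ Z₂) := by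
  have : PreservesBinaryBiproducts π := preservesBinaryBiproducts_of_preservesBinaryProducts π
  have : PreservesColimitsOfSize.{0, 0} π := adj.leftAdjoint_preservesColimits
  ext P
  constructor
  · rintro ⟨M', N', Q, i, p, ⟨M, hM, ⟨eM⟩⟩, ⟨N, hN, ⟨eN⟩⟩, hi, hp⟩
    let e : M' ⊞ N' ≅ π.obj (M ⊞ N) := (biprod.mapIso eM eN).symm ≪≫ (π.mapBiprod M N).symm
    obtain ⟨Q₀, m₀, eQ, hm₀⟩ := lift_mono adj (i ≫ e.hom)
    obtain ⟨P₀, p₀, eP, hp₀⟩ := lift_epi adj (eQ.hom ≫ p)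
    exact ⟨P₀, ⟨M, N, Q₀, m₀, p₀, hM, hN, hm₀, hp₀⟩, ⟨eP⟩⟩
  · rintro ⟨P₀, ⟨M, N, Q, i, p, hM, hN, hi, hp⟩, ⟨e⟩⟩
    exact ⟨π.obj M, π.obj N, π.obj Q, π.map i ≫ (π.mapBiprod M N).hom, π.map p ≫ e.hom,
      ⟨M, hM, ⟨Iso.refl _⟩⟩, ⟨N, hN, ⟨Iso.refl _⟩⟩, mono_comp _ _, epi_comp _ _⟩

lemma imageSub_weaklyClosed [HasColimits C] [HasColimits D] (adj : π ⊣ ω)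
    [PreservesFiniteLimits π] [ω.Full] [ω.Faithful] {Z : Set C} (hZ : IsWeaklyClosed Z) :
    IsWeaklyClosed (imageSub π Z) where
  mem_of_mono := by
    rintro A M' f hf ⟨M, hM, ⟨e⟩⟩
    obtain ⟨Q₀, m₀, eQ, hm₀⟩ := lift_mono adj (f ≫ e.inv)
    exact ⟨Q₀, hZ.mem_of_mono m₀ hm₀ hM, ⟨eQ⟩⟩
  mem_of_epi := by
    rintro M' B f hf ⟨M, hM, ⟨e⟩⟩
    obtain ⟨Q₀, m₀, eQ, hm₀⟩ := lift_epi adj (e.hom ≫ f)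
    exact ⟨Q₀, hZ.mem_of_epi m₀ hm₀ hM, ⟨eQ⟩⟩
  sigma_mem := by
    intro ι f hf
    choose M hM e using hf
    have : PreservesColimitsOfSize.{v, v} π := adj.leftAdjoint_preservesColimits
    exact ⟨∐ M, hZ.sigma_mem M hM,
      ⟨PreservesCoproduct.iso π M ≪≫ Sigma.mapIso fun j => (e j).some⟩⟩

lemma imageSub_products [HasColimits C] [HasLimits C] [HasLimits D] (adj : π ⊣ ω)
    [ω.Full] [ω.Faithful] {Z : Set C} (hZ : IsClosedSub Z)
    (hs : EssStable π ω Z) : ClosedUnderProducts (imageSub π Z) := by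
  intro ι f hf
  have : PreservesLimitsOfSize.{v, v} ω := adj.rightAdjoint_preservesLimits
  have h : ∀ j, ω.obj (f j) ∈ Z := by
    intro j
    obtain ⟨M, hM, ⟨e⟩⟩ := hf j
    exact mem_of_iso hZ.1 (ω.mapIso e) (hs M hM)
  exact ⟨∏ᶜ fun j => ω.obj (f j), hZ.2 _ h,
    ⟨π.mapIso (PreservesProduct.iso ω f).symm ≪≫ asIso (adj.counit.app (∏ᶜ f))⟩⟩

end Quot

lemma torsionfreeGenerated_union [HasColimits C] [HasFilteredColimits C] [AB5 C] {Y : Set C}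
    (hY : IsWeaklyClosed Y) {Z₁ Z₂ : Set C} (hZ₁ : IsWeaklyClosed Z₁) (hZ₂ : IsWeaklyClosed Z₂)
    (h₁ : TorsionfreeGenerated Y Z₁) (h₂ : TorsionfreeGenerated Y Z₂) :
    TorsionfreeGenerated Y (unionWC Z₁ Z₂) := by
  rintro P ⟨M, N, Q, i, p, hM, hN, hi, hp⟩
  obtain ⟨ι, f, hf, a, ha⟩ := h₁ hM
  obtain ⟨κ, g, hg, b, hb⟩ := h₂ hN
  let c : (∐ f) ⊞ (∐ g) ⟶ M ⊞ N := biprod.map a b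
  have hfst : Mono (pullback.fst c i) := inferInstance
  have hQ : pullback c i ∈ unionWC Z₁ Z₂ :=
    ⟨∐ f, ∐ g, pullback c i, pullback.fst c i, 𝟙 _, hZ₁.sigma_mem f fun j => (hf j).1,
      hZ₂.sigma_mem g fun j => (hg j).1, hfst, inferInstance⟩
  have htf := torsionFree_sigma hY f fun j => (hf j).2
  have htg := torsionFree_sigma hY g fun j => (hg j).2
  have ht : IsTorsionFree Y (pullback c i) := by
    refine torsionFree_of_hom_zero fun T hT x => ?_
    rw [← cancel_mono (pullback.fst c i)]
    apply biprod.hom_ext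
    · rw [torsionFree_hom_zero hY htf hT ((x ≫ pullback.fst c i) ≫ biprod.fst)]; simp
    · rw [torsionFree_hom_zero hY htg hT ((x ≫ pullback.fst c i) ≫ biprod.snd)]; simp
  let q : pullback c i ⟶ P := pullback.snd c i ≫ p
  have hq : Epi q := epi_comp _ _
  let s : (∐ fun _ : PUnit.{v + 1} => pullback c i) ⟶ P := Sigma.desc fun _ => q
  have hs : Sigma.ι (fun _ : PUnit.{v + 1} => pullback c i) PUnit.unit ≫ s = q := by simp [s]
  exact ⟨PUnit, fun _ => pullback c i, fun _ => ⟨hQ, ht⟩, s, epi_of_epi_fac hs⟩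

end Helpers

/-- For weakly closed `Z₁, Z₂` in `X`: (1) `π(Z₁) ∪ π(Z₂) = π(Z₁ ∪ Z₂)`;
(2) if `Z₁, Z₂` are `Y`-torsionfree generated, so is `Z₁ ∪ Z₂`; (3) if `X` satisfies
(AB4*) and `Z₁, Z₂` are closed, then `Z₁ ∪ Z₂` is closed, and if moreover `Z₁ ∪ Z₂` is
`Y`-essentially stable, then `π(Z₁) ∪ π(Z₂)` is closed in `X/Y`. -/
theorem statement_19 {X : Type u} [Category.{v} X] [Abelian X]
    [HasLimits X] [HasColimits X] [HasFilteredColimits X] [AB5 X] [HasProducts X]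
    (hgen : ∃ G : X, IsSeparator G)
    {D : Type u} [Category.{v} D] [Abelian D] [HasLimits D] [HasColimits D]
    (Y : Set X) (hYloc : IsLocalizing Y)
    (π : X ⥤ D) (ω : D ⥤ X) (adj : π ⊣ ω) [PreservesFiniteLimits π]
    [ω.Full] [ω.Faithful]
    (hker : ∀ M : X, M ∈ Y ↔ IsZero (π.obj M))
    (Z₁ Z₂ : Set X) (hZ₁ : IsWeaklyClosed Z₁) (hZ₂ : IsWeaklyClosed Z₂) :
    (unionWC (imageSub π Z₁) (imageSub π Z₂) = imageSub π (unionWC Z₁ Z₂)) ∧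
    (TorsionfreeGenerated Y Z₁ → TorsionfreeGenerated Y Z₂ →
      TorsionfreeGenerated Y (unionWC Z₁ Z₂)) ∧
    (Nonempty (AB4Star X) → IsClosedSub Z₁ → IsClosedSub Z₂ →
      IsClosedSub (unionWC Z₁ Z₂) ∧
      (EssStable π ω (unionWC Z₁ Z₂) →
        IsClosedSub (unionWC (imageSub π Z₁) (imageSub π Z₂)))) := by
  have hX : IsWeaklyClosed (unionWC Z₁ Z₂) := unionWC_weaklyClosed hZ₁ hZ₂
  refine ⟨imageSub_union adj Z₁ Z₂,
    torsionfreeGenerated_union hYloc.1 hZ₁ hZ₂, ?_⟩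
  rintro ⟨hAB⟩ h₁ h₂
  have hcl : IsClosedSub (unionWC Z₁ Z₂) := ⟨hX, unionWC_products h₁.2 h₂.2⟩
  refine ⟨hcl, fun hs => ?_⟩
  rw [imageSub_union adj Z₁ Z₂]
  exact ⟨imageSub_weaklyClosed adj hX, imageSub_products adj hcl hs⟩

end Paper
end
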